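/- Let $n \ge 1$ and let $a$ be an $n \times n$ complex matrix. Then $\mathrm{Tr}(a) = \mathrm{Tr}(|a|)$ (equality as complex numbers, the right-hand side being the nonnegative real trace of $|a|$) if and only if $a$ is positive semidefinite. -/

import Mathlib

open Matrix
open scoped ComplexOrder

open scoped MatrixOrder in
/-- `matAbs a` is `|a|`, the unique positive semidefinite square root of `aᴴ * a`. -/
noncomputable def matAbs {n : ℕ} (a : Matrix (Fin n) (Fin n) ℂ) : Matrix (Fin n) (Fin n) ℂ :=
  CFC.sqrt (aᴴ * a)

/-!
Since `|a|² = aᴴ a`, we have `‖a v‖ = ‖|a| v‖` for every vector `v`. Let `v i` be an orthonormal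
basis with `|a| (v i) = μ i • v i`. By Cauchy–Schwarz `re ⟪v i, a (v i)⟫ ≤ ‖a (v i)‖ = μ i`, and
summing over `i` gives `re (Tr a) ≤ Tr |a|`. If the traces agree, every summand is an equality, and
the equality case of Cauchy–Schwarz forces `a (v i) = μ i • v i`, that is, `a = |a|`.
-/

section InnerProductSpace

variable {𝕜 E : Type*} [RCLike 𝕜] [NormedAddCommGroup E] [InnerProductSpace 𝕜 E]

theorem eq_of_norm_le_of_norm_sq_le_re_inner {x y : E} (hnorm : ‖x‖ ≤ ‖y‖)
    (hinner : ‖y‖ ^ 2 ≤ RCLike.re (inner 𝕜 x y)) : x = y := by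
  have hsub : ‖x - y‖ ^ 2 ≤ 0 :=
    calc ‖x - y‖ ^ 2 = ‖x‖ ^ 2 - 2 * RCLike.re (inner 𝕜 x y) + ‖y‖ ^ 2 := norm_sub_sq x y
      _ ≤ ‖y‖ ^ 2 - 2 * ‖y‖ ^ 2 + ‖y‖ ^ 2 := by gcongr
      _ = 0 := by ring
  have hsub_zero : ‖x - y‖ ^ 2 = 0 := hsub.antisymm (sq_nonneg _)
  exact norm_sub_eq_zero_iff.mp (pow_eq_zero_iff two_ne_zero |>.mp hsub_zero)

theorem eq_smul_of_norm_le_of_re_inner_eq {v x : E} {μ : ℝ} (hnorm : ‖x‖ ≤ ‖(μ : 𝕜) • v‖)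
    (hinner : RCLike.re (inner 𝕜 v x) = RCLike.re (inner 𝕜 v ((μ : 𝕜) • v))) :
    x = (μ : 𝕜) • v := by
  refine eq_of_norm_le_of_norm_sq_le_re_inner (𝕜 := 𝕜) hnorm (le_of_eq ?_)
  have re_inner_smul (y : E) :
      RCLike.re (inner 𝕜 y ((μ : 𝕜) • v)) = μ * RCLike.re (inner 𝕜 v y) := by
    rw [inner_smul_right, RCLike.re_ofReal_mul, inner_re_symm]
  rw [re_inner_smul, hinner, ← re_inner_smul, inner_self_eq_norm_sq]

theorem re_inner_le_re_inner_smul_self_of_norm_le {v x : E} {μ : ℝ} (hμ : 0 ≤ μ)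
    (hnorm : ‖x‖ ≤ ‖(μ : 𝕜) • v‖) :
    RCLike.re (inner 𝕜 v x) ≤ RCLike.re (inner 𝕜 v ((μ : 𝕜) • v)) :=
  calc RCLike.re (inner 𝕜 v x) ≤ ‖v‖ * ‖x‖ := re_inner_le_norm v x
    _ ≤ ‖v‖ * ‖(μ : 𝕜) • v‖ := by gcongr
    _ = μ * ‖v‖ ^ 2 := by rw [norm_smul, RCLike.norm_of_nonneg hμ]; ring
    _ = RCLike.re (inner 𝕜 v ((μ : 𝕜) • v)) := by
      rw [inner_smul_right, RCLike.re_ofReal_mul, inner_self_eq_norm_sq]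

theorem re_trace_eq_sum_re_inner {ι : Type*} [Fintype ι] (T : E →ₗ[𝕜] E)
    (b : OrthonormalBasis ι 𝕜 E) :
    RCLike.re (LinearMap.trace 𝕜 E T) = ∑ i, RCLike.re (inner 𝕜 (b i) (T (b i))) := by
  rw [T.trace_eq_sum_inner b, map_sum]

theorem eq_of_norm_apply_le_of_re_trace_eq [FiniteDimensional 𝕜 E] {S T : E →ₗ[𝕜] E}
    (hS : S.IsPositive) (hnorm : ∀ x, ‖T x‖ ≤ ‖S x‖)
    (htrace : RCLike.re (LinearMap.trace 𝕜 E T) = RCLike.re (LinearMap.trace 𝕜 E S)) :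
    T = S := by
  let b := hS.isSymmetric.eigenvectorBasis rfl
  let μ := hS.isSymmetric.eigenvalues rfl
  have hb (i) : S (b i) = (μ i : 𝕜) • b i := hS.isSymmetric.apply_eigenvectorBasis rfl i
  have hnorm_b (i) : ‖T (b i)‖ ≤ ‖(μ i : 𝕜) • b i‖ := hb i ▸ hnorm (b i)
  have hle (i) :
      RCLike.re (inner 𝕜 (b i) (T (b i))) ≤ RCLike.re (inner 𝕜 (b i) ((μ i : 𝕜) • b i)) :=
    re_inner_le_re_inner_smul_self_of_norm_le (hS.nonneg_eigenvalues rfl i) (hnorm_b i)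
  have hsum : ∑ i, RCLike.re (inner 𝕜 (b i) (T (b i))) =
      ∑ i, RCLike.re (inner 𝕜 (b i) ((μ i : 𝕜) • b i)) := by
    simpa only [re_trace_eq_sum_re_inner _ b, hb] using htrace
  have hinner := (Finset.sum_eq_sum_iff_of_le fun i _ ↦ hle i).mp hsum
  refine b.toBasis.ext fun i ↦ ?_
  rw [b.coe_toBasis, hb]
  exact eq_smul_of_norm_le_of_re_inner_eq (hnorm_b i) (hinner i (Finset.mem_univ i))

end InnerProductSpace

section Matrix

variable {𝕜 l m n : Type*} [RCLike 𝕜] [Fintype n]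

theorem norm_sq_toEuclideanLin [Fintype m] [DecidableEq n] (a : Matrix m n 𝕜)
    (x : EuclideanSpace 𝕜 n) :
    ‖toEuclideanLin a x‖ ^ 2 = RCLike.re (inner 𝕜 x (toEuclideanLin (aᴴ * a) x)) := by
  classical
  have hmul : toEuclideanLin (aᴴ * a) x = toEuclideanLin aᴴ (toEuclideanLin a x) := by
    simp only [toLpLin_apply, mulVec_mulVec]
  rw [hmul, toEuclideanLin_conjTranspose_eq_adjoint, LinearMap.adjoint_inner_right,
    inner_self_eq_norm_sq]

theorem norm_toEuclideanLin_eq_of_conjTranspose_mul_self_eq [Fintype l] [Fintype m]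
    [DecidableEq n] {a : Matrix l n 𝕜} {b : Matrix m n 𝕜} (h : aᴴ * a = bᴴ * b)
    (x : EuclideanSpace 𝕜 n) : ‖toEuclideanLin a x‖ = ‖toEuclideanLin b x‖ := by
  rw [← sq_eq_sq₀ (norm_nonneg _) (norm_nonneg _), norm_sq_toEuclideanLin, norm_sq_toEuclideanLin,
    h]

theorem trace_toEuclideanLin [DecidableEq n] (a : Matrix n n 𝕜) :
    LinearMap.trace 𝕜 (EuclideanSpace 𝕜 n) (toEuclideanLin a) = a.trace := by
  rw [toEuclideanLin_eq_toLin_orthonormal, trace_toLin_eq]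

theorem eq_of_conjTranspose_mul_self_eq_of_re_trace_eq {a p : Matrix n n 𝕜} (hp : p.PosSemidef)
    (hmul : aᴴ * a = pᴴ * p) (htrace : RCLike.re a.trace = RCLike.re p.trace) : a = p := by
  classical
  refine toEuclideanLin.injective (eq_of_norm_apply_le_of_re_trace_eq
    (isPositive_toEuclideanLin_iff.mpr hp)
    (fun x ↦ (norm_toEuclideanLin_eq_of_conjTranspose_mul_self_eq hmul x).le) ?_)
  rw [trace_toEuclideanLin, trace_toEuclideanLin, htrace]

open scoped MatrixOrder

theorem posSemidef_cfcAbs [DecidableEq n] (a : Matrix n n 𝕜) : (CFC.abs a).PosSemidef :=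
  nonneg_iff_posSemidef.mp (CFC.abs_nonneg a)

theorem trace_eq_trace_abs_iff_posSemidef_general [DecidableEq n] (a : Matrix n n 𝕜) :
    a.trace = (CFC.abs a).trace ↔ a.PosSemidef := by
  have habs := posSemidef_cfcAbs a
  constructor
  · intro htrace
    have hmul : aᴴ * a = (CFC.abs a)ᴴ * CFC.abs a := by
      rw [habs.isHermitian.eq, CFC.abs_mul_abs, star_eq_conjTranspose]
    rwa [eq_of_conjTranspose_mul_self_eq_of_re_trace_eq habs hmul (congrArg _ htrace)]
  · intro ha
    rw [CFC.abs_of_nonneg a ha.nonneg]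

end Matrix

theorem trace_eq_trace_abs_iff_posSemidef {n : ℕ} (hn : 1 ≤ n)
    (a : Matrix (Fin n) (Fin n) ℂ) :
    Matrix.trace a = Matrix.trace (matAbs a) ↔ a.PosSemidef :=
  trace_eq_trace_abs_iff_posSemidef_general a
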